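/- arXiv:math-ph/0106028 — 3 statements merged into one kernel-verified Lean document; each statement's English description precedes it below -/
import Mathlib

section
/- Let X be a complex normed space and H a complex Hilbert space. Let t : ℕ → ℝ be a summable sequence with tⱼ ≥ 0. Suppose that for every finite subset S ⊆ ℕ we are given a vector Φ_S ∈ H with ‖Φ_S‖ ≤ 1 and a continuous linear functional φ_S on X with ‖φ_S‖ ≤ ∏_{j ∈ S} tⱼ. Then for every x ∈ X the family (φ_S(x)·Φ_S)_{S finite ⊆ ℕ} is absolutely summable in H, and the map Θ : X → H, Θ(x) = ∑_S φ_S(x)·Φ_S, is a well-defined bounded linear map with operator norm ‖Θ‖ ≤ ∏_j (1 + tⱼ) ≤ exp(∑_j tⱼ). -/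
/-!
The rank-one operators `x ↦ φ_S(x) • Φ_S` have operator norm at most `∏_{j ∈ S} t j`, and these
bounds sum, over the finite subsets `S` of `ℕ`, to the expansion of the product `∏' j, (1 + t j)`
(`tprod_one_add`). Since `X →L[ℂ] H` is complete, the operators sum to some `Θ` in operator norm,
which gives the bound on `‖Θ‖`, and evaluation at `x` commutes with the sum. The exponential bound
follows from `1 + t j ≤ exp (t j)` on finite partial products.
-/

/-- Given a nonnegative summable sequence `t`, vectors `Φ_S` of norm at most `1` and
functionals `φ_S` with `‖φ_S‖ ≤ ∏_{j ∈ S} t j`, indexed by the finite subsets `S ⊆ ℕ`,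
the family `(φ_S(x) • Φ_S)_S` is absolutely summable for each `x`, and
`Θ(x) = ∑_S φ_S(x) • Φ_S` defines a bounded linear map with
`‖Θ‖ ≤ ∏ⱼ (1 + tⱼ) ≤ exp (∑ⱼ tⱼ)`. -/
theorem stmt6 {X H : Type*} [NormedAddCommGroup X] [NormedSpace ℂ X]
    [NormedAddCommGroup H] [InnerProductSpace ℂ H] [CompleteSpace H]
    (t : ℕ → ℝ) (ht : Summable t) (htpos : ∀ j, 0 ≤ t j)
    (Φ : Finset ℕ → H) (hΦ : ∀ S, ‖Φ S‖ ≤ 1)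
    (φ : Finset ℕ → (X →L[ℂ] ℂ)) (hφ : ∀ S, ‖φ S‖ ≤ ∏ j ∈ S, t j) :
    (∀ x : X, Summable fun S : Finset ℕ => ‖φ S x • Φ S‖) ∧
    ∃ Θ : X →L[ℂ] H,
      (∀ x : X, Θ x = ∑' S : Finset ℕ, φ S x • Φ S) ∧
      ‖Θ‖ ≤ (∏' j, (1 + t j)) ∧
      (∏' j, (1 + t j)) ≤ Real.exp (∑' j, t j) := by
  have hsum : Summable fun S : Finset ℕ => ∏ j ∈ S, t j :=
    summable_finsetProd_of_summable_nonneg htpos ht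
  have hbound : ∀ S, ‖(φ S).smulRight (Φ S)‖ ≤ ∏ j ∈ S, t j := fun S => by
    rw [ContinuousLinearMap.norm_smulRight_apply]
    exact (mul_le_of_le_one_right (norm_nonneg _) (hΦ S)).trans (hφ S)
  have hop : Summable fun S : Finset ℕ => (φ S).smulRight (Φ S) :=
    hsum.of_norm_bounded hbound
  refine ⟨fun x => ?_, ∑' S, (φ S).smulRight (Φ S), fun x => ?_, ?_, ?_⟩
  · refine Summable.of_nonneg_of_le (fun _ => norm_nonneg _) (fun S => ?_) (hsum.mul_right ‖x‖)
    exact ((φ S).smulRight (Φ S)).le_of_opNorm_le (hbound S) x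
  · exact (ContinuousLinearMap.apply ℂ H x).map_tsum hop
  · rw [tprod_one_add hsum]
    exact tsum_of_norm_bounded hsum.hasSum hbound
  · refine le_of_tendsto (multipliable_one_add_of_summable_prod hsum).hasProd
      (Filter.Eventually.of_forall fun s => ?_)
    calc ∏ j ∈ s, (1 + t j) ≤ ∏ j ∈ s, Real.exp (t j) :=
          Finset.prod_le_prod (fun j _ => add_nonneg zero_le_one (htpos j))
            fun j _ => (add_comm 1 (t j)).trans_le (Real.add_one_le_exp (t j))
      _ = Real.exp (∑ j ∈ s, t j) := (Real.exp_sum s t).symm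
      _ ≤ Real.exp (∑' j, t j) :=
          Real.exp_le_exp.mpr (ht.sum_le_tsum s fun j _ => htpos j)
end

section
/- Let T be a bounded self-adjoint operator on a complex Hilbert space H and m₀ > 0 a real number such that T² ≥ m₀²·1. Then the spectrum of T is contained in (−∞, −m₀] ∪ [m₀, ∞); the operator P = f(T), defined by the continuous functional calculus for any continuous f : ℝ → ℝ with f = 1 on [m₀, ∞) and f = 0 on (−∞, −m₀], is an orthogonal projection commuting with T and independent of the choice of such f; and for every β ≥ 0 one has ‖exp(−βT)∘P‖ ≤ e^{−β m₀}. -/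
open scoped InnerProductSpace

/-!
Since `T ^ 2 - m₀ ^ 2 = cfc (fun x => x ^ 2 - m₀ ^ 2) T` is a positive operator, the function
`x ^ 2 - m₀ ^ 2` is nonnegative on the real spectrum of `T`, so this spectrum avoids
`(-m₀, m₀)` (`le_neg_or_le_of_mem_spectrum`). On the spectrum an admissible `f` therefore takes
only the values `0` and `1`, which are prescribed there, and the remaining claims are pointwise
statements about functions on the spectrum, transferred to `T` by the continuous functional
calculus.
-/

/-- The real spectrum of `T` has a gap `(-m₀, m₀)`; all other claims rest on this. -/
theorem le_neg_or_le_of_mem_spectrum {H : Type*} [NormedAddCommGroup H] [InnerProductSpace ℂ H]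
    [CompleteSpace H] (T : H →L[ℂ] H) (hT : IsSelfAdjoint T) (m₀ : ℝ) (hm₀ : 0 < m₀)
    (hT2 : ∀ x : H, m₀ ^ 2 * ‖x‖ ^ 2 ≤ (⟪x, T (T x)⟫_ℂ).re) {x : ℝ} (hx : x ∈ spectrum ℝ T) :
    x ≤ -m₀ ∨ m₀ ≤ x := by
  have hcfc : cfc (fun y : ℝ => y ^ 2 - m₀ ^ 2) T = T ^ 2 - algebraMap ℝ (H →L[ℂ] H) (m₀ ^ 2) := by
    rw [cfc_sub (fun y : ℝ => y ^ 2) (fun _ => m₀ ^ 2) T, cfc_pow_id (R := ℝ) T 2,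
      cfc_const (m₀ ^ 2) T]
  have hpos : 0 ≤ cfc (fun y : ℝ => y ^ 2 - m₀ ^ 2) T := by
    rw [ContinuousLinearMap.nonneg_iff_isPositive, ContinuousLinearMap.isPositive_def']
    refine ⟨cfc_predicate _ T, fun v => ?_⟩
    rw [hcfc, ContinuousLinearMap.reApplyInnerSelf_apply, inner_re_symm]
    have h := hT2 v
    have hv : (⟪v, (m₀ ^ 2 : ℝ) • v⟫_ℂ).re = m₀ ^ 2 * ‖v‖ ^ 2 := by
      rw [← Complex.coe_smul, inner_smul_right, Complex.re_ofReal_mul,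
        ← inner_self_eq_norm_sq (𝕜 := ℂ) v]
      rfl
    rw [pow_two m₀] at h hv
    simp [Algebra.algebraMap_eq_smul_one, pow_two, inner_sub_right] at h ⊢
    linarith
  have h := (cfc_nonneg_iff (fun y : ℝ => y ^ 2 - m₀ ^ 2) T).1 hpos x hx
  have habs : m₀ ≤ |x| := by
    rw [← abs_of_pos hm₀]
    exact sq_le_sq.1 (by linarith)
  rcases le_abs.1 habs with h | h
  · exact Or.inr h
  · exact Or.inl (by linarith)

/-- Let `T` be a bounded self-adjoint operator with `T² ≥ m₀²·1`, `m₀ > 0`. Then the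
spectrum of `T` is contained in `(-∞, -m₀] ∪ [m₀, ∞)`; for any continuous `f : ℝ → ℝ`
with `f = 1` on `[m₀, ∞)` and `f = 0` on `(-∞, -m₀]`, the operator `P = f(T)` (continuous
functional calculus) is an orthogonal projection commuting with `T`, independent of the
choice of such `f`; and `‖exp(-βT) ∘ P‖ ≤ exp(-β m₀)` for all `β ≥ 0`. -/
theorem stmt9 {H : Type*} [NormedAddCommGroup H] [InnerProductSpace ℂ H] [CompleteSpace H]
    (T : H →L[ℂ] H) (hT : IsSelfAdjoint T) (m₀ : ℝ) (hm₀ : 0 < m₀)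
    (hT2 : ∀ x : H, m₀ ^ 2 * ‖x‖ ^ 2 ≤ (⟪x, T (T x)⟫_ℂ).re) :
    spectrum ℂ T ⊆ {z : ℂ | z.im = 0 ∧ (z.re ≤ -m₀ ∨ m₀ ≤ z.re)} ∧
    ∀ f : ℝ → ℝ, Continuous f → (∀ x : ℝ, m₀ ≤ x → f x = 1) →
      (∀ x : ℝ, x ≤ -m₀ → f x = 0) →
      (IsSelfAdjoint (cfc f T) ∧ cfc f T ∘L cfc f T = cfc f T ∧
        cfc f T ∘L T = T ∘L cfc f T) ∧
      (∀ g : ℝ → ℝ, Continuous g → (∀ x : ℝ, m₀ ≤ x → g x = 1) →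
        (∀ x : ℝ, x ≤ -m₀ → g x = 0) → cfc f T = cfc g T) ∧
      (∀ β : ℝ, 0 ≤ β →
        ‖cfc (fun x : ℝ => Real.exp (-β * x)) T ∘L cfc f T‖ ≤ Real.exp (-β * m₀)) := by
  have hgap : ∀ x ∈ spectrum ℝ T, x ≤ -m₀ ∨ m₀ ≤ x := fun x hx =>
    le_neg_or_le_of_mem_spectrum T hT m₀ hm₀ hT2 hx
  refine ⟨fun z hz => ?_, fun f hf hf1 hf0 => ⟨⟨cfc_predicate f T, ?_, ?_⟩, ?_, ?_⟩⟩
  · have hre := hT.mem_spectrum_eq_re hz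
    refine ⟨by rw [hre, Complex.ofReal_im], hgap _ ?_⟩
    rw [← spectrum.algebraMap_mem_iff ℂ, Complex.coe_algebraMap, ← hre]
    exact hz
  · rw [← ContinuousLinearMap.mul_def, ← cfc_mul f f T hf.continuousOn hf.continuousOn]
    refine cfc_congr fun x hx => ?_
    rcases hgap x hx with h | h
    · simp [hf0 x h]
    · simp [hf1 x h]
  · have h := (cfc_commute_cfc f id T).eq
    rwa [cfc_id ℝ T] at h
  · intro g _ hg1 hg0
    refine cfc_congr fun x hx => ?_
    rcases hgap x hx with h | h
    · rw [hf0 x h, hg0 x h]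
    · rw [hf1 x h, hg1 x h]
  · intro β hβ
    have hexp : Continuous fun x : ℝ => Real.exp (-β * x) := by fun_prop
    rw [← ContinuousLinearMap.mul_def,
      ← cfc_mul (fun x : ℝ => Real.exp (-β * x)) f T hexp.continuousOn hf.continuousOn]
    refine norm_cfc_le (Real.exp_pos _).le fun x hx => ?_
    rcases hgap x hx with h | h
    · simp [hf0 x h, (Real.exp_pos _).le]
    · rw [hf1 x h, mul_one, Real.norm_of_nonneg (Real.exp_pos _).le]
      exact Real.exp_le_exp.2 (mul_le_mul_of_nonpos_left h (neg_nonpos.2 hβ))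
end

section
/- Let T be a bounded self-adjoint operator on a complex Hilbert space H and m₀ > 0 with T² ≥ m₀²·1, and let C : H → H be a conjugate-linear isometric involution (C² = id, ⟨Cx, Cy⟩ = ⟨y, x⟩) satisfying C∘T = −T∘C. Let P be the spectral projection of T onto the positive part [m₀, ∞) of its spectrum (P = f(T) for continuous f with f = 1 on [m₀, ∞), f = 0 on (−∞, −m₀]). Then C∘P∘C = 1 − P. -/
open scoped InnerProductSpace

/-!
Conjugation `A ↦ C A C` is a continuous *real* star-algebra endomorphism of the bounded
operators (conjugate-linearity of `C` costs only complex scalars), so it commutes with the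
real continuous functional calculus: `C f(T) C = f(C T C) = f(-T)`. The lower bound on `T²`
confines the real spectrum of `T` to `|x| ≥ m₀`, where `f (-x) = 1 - f x`, whence
`f(-T) = 1 - f(T)`.
-/

section Helpers

variable {H : Type*} [NormedAddCommGroup H] [InnerProductSpace ℂ H] [CompleteSpace H]

/-- Conjugation `A ↦ C A C` by an antiunitary involution, as a real star-algebra
endomorphism of the bounded operators. -/
noncomputable def antiunitaryConj (C : H →L⋆[ℂ] H) (hC2 : ∀ x, C (C x) = x)
    (hCinner : ∀ x y, ⟪C x, C y⟫_ℂ = ⟪y, x⟫_ℂ) : (H →L[ℂ] H) →⋆ₐ[ℝ] (H →L[ℂ] H) where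
  toFun A := C.comp (A.comp C)
  map_one' := by ext x; simp [hC2]
  map_mul' A B := by ext x; simp [hC2]
  map_zero' := by ext x; simp
  map_add' A B := by ext x; simp
  commutes' r := by
    ext x
    simp [Algebra.algebraMap_eq_smul_one, ← Complex.coe_smul, hC2]
  map_star' A := by
    rw [ContinuousLinearMap.star_eq_adjoint, ContinuousLinearMap.star_eq_adjoint,
      ContinuousLinearMap.eq_adjoint_iff]
    intro x y
    have hleft : ∀ u v : H, ⟪C u, v⟫_ℂ = ⟪C v, u⟫_ℂ := fun u v => by
      simpa only [hC2] using hCinner u (C v)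
    have hright : ∀ u v : H, ⟪u, C v⟫_ℂ = ⟪v, C u⟫_ℂ := fun u v => by
      simpa only [hC2] using hCinner (C u) v
    simp only [ContinuousLinearMap.comp_apply]
    rw [hleft, hright, ContinuousLinearMap.adjoint_inner_right]

theorem antiunitaryConj_apply (C : H →L⋆[ℂ] H) (hC2 : ∀ x, C (C x) = x)
    (hCinner : ∀ x y, ⟪C x, C y⟫_ℂ = ⟪y, x⟫_ℂ) (A : H →L[ℂ] H) (x : H) :
    antiunitaryConj C hC2 hCinner A x = C (A (C x)) := rfl

theorem le_abs_of_mem_spectrum {T : H →L[ℂ] H} (hT : IsSelfAdjoint T) {m₀ : ℝ}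
    (hT2 : ∀ x : H, m₀ ^ 2 * ‖x‖ ^ 2 ≤ (⟪x, T (T x)⟫_ℂ).re) {x : ℝ} (hx : x ∈ spectrum ℝ T) :
    m₀ ≤ |x| := by
  have hle : algebraMap ℝ (H →L[ℂ] H) (m₀ ^ 2) ≤ T ^ 2 := by
    rw [ContinuousLinearMap.le_def, ContinuousLinearMap.isPositive_def']
    refine ⟨(hT.pow 2).sub (.algebraMap _ (.all _)), fun y => ?_⟩
    have h := hT2 y
    rw [ContinuousLinearMap.reApplyInnerSelf_apply, inner_re_symm]
    simp only [Algebra.algebraMap_eq_smul_one, ← Complex.coe_smul, pow_two] at h ⊢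
    simpa [inner_sub_right, inner_smul_right, pow_two] using h
  have h := (algebraMap_le_iff_le_spectrum (hT.pow 2)).1 hle _ (spectrum.pow_mem_pow T 2 hx)
  exact le_of_sq_le_sq (by simpa using h) (abs_nonneg x)

end Helpers

/-- Let `T` be a bounded self-adjoint operator with `T² ≥ m₀²·1`, `m₀ > 0`, and let `C`
be a conjugate-linear isometric involution anticommuting with `T`. Then the spectral
projection `P = f(T)` of `T` onto `[m₀, ∞)` (with `f` continuous, `f = 1` on `[m₀, ∞)`,
`f = 0` on `(-∞, -m₀]`) satisfies `C P C = 1 - P`. -/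
theorem stmt10 {H : Type*} [NormedAddCommGroup H] [InnerProductSpace ℂ H] [CompleteSpace H]
    (T : H →L[ℂ] H) (hT : IsSelfAdjoint T) (m₀ : ℝ) (hm₀ : 0 < m₀)
    (hT2 : ∀ x : H, m₀ ^ 2 * ‖x‖ ^ 2 ≤ (⟪x, T (T x)⟫_ℂ).re)
    (C : H →L⋆[ℂ] H) (hC2 : ∀ x, C (C x) = x)
    (hCinner : ∀ x y, ⟪C x, C y⟫_ℂ = ⟪y, x⟫_ℂ)
    (hCT : ∀ x, C (T x) = -T (C x))
    (f : ℝ → ℝ) (hf : Continuous f) (hf1 : ∀ x : ℝ, m₀ ≤ x → f x = 1)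
    (hf0 : ∀ x : ℝ, x ≤ -m₀ → f x = 0) :
    ∀ k : H, C (cfc f T (C k)) = k - cfc f T k := by
  intro k
  have hφ : Continuous (antiunitaryConj C hC2 hCinner) := by
    refine AddMonoidHomClass.continuous_of_bound _ (‖C‖ * ‖C‖) fun A => ?_
    calc ‖C.comp (A.comp C)‖ ≤ ‖C‖ * (‖A‖ * ‖C‖) :=
          (C.opNorm_comp_le _).trans (by gcongr; exact A.opNorm_comp_le C)
      _ = ‖C‖ * ‖C‖ * ‖A‖ := by ring
  have hφT : antiunitaryConj C hC2 hCinner T = -T := by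
    ext x
    simp [antiunitaryConj_apply, hCT, hC2]
  have hmap := StarAlgHomClass.map_cfc (antiunitaryConj C hC2 hCinner) f T
    hf.continuousOn hφ hT (hφT ▸ hT.neg)
  have hreflect : cfc f (-T) = 1 - cfc f T := by
    rw [← cfc_comp_neg f T, ← cfc_one ℝ T, ← cfc_sub _ _ T]
    refine cfc_congr fun x hx => ?_
    rcases le_abs.1 (le_abs_of_mem_spectrum hT hT2 hx) with h | h
    · simp [hf1 x h, hf0 (-x) (by linarith)]
    · simp [hf1 (-x) h, hf0 x (by linarith)]
  rw [hφT, hreflect] at hmap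
  exact congrArg (fun A : H →L[ℂ] H => A k) hmap
end
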